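/- Let G be a symmetric directed graph on m vertices with d ordered arcs, each arc (j,i) carrying a real matrix C_{ji} with n columns, and let G_1, G_2, …, G_p be symmetric spanning subgraphs of G whose union is G. Let J be the incidence matrix of G, J_i the spanning incidence matrix of G_i and W_i the spanning weight matrix of G_i, and set J̄ = J ⊗ I_n, J̄_i = J_i ⊗ I_n, W̄_i = W_i ⊗ I_n. Then kernel(C J̄ᵀ) = kernel(C ∑_{i=1}^p W̄_i^{1/2} J̄_iᵀ). -/

import Mathlib

open Matrix

open Matrix

/-- Incidence matrix of the directed graph on `Fin m` whose `k`-th arc is `(src k, dst k)`: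
column `k` has a `1` in row `dst k` and a `-1` in row `src k`. -/
def incMat (m d : ℕ) (src dst : Fin d → Fin m) : Matrix (Fin m) (Fin d) ℝ :=
  Matrix.of fun i k => (if dst k = i then (1 : ℝ) else 0) - (if src k = i then (1 : ℝ) else 0)

/-- Block-diagonal matrix whose `k`-th diagonal block is the arc matrix `Cm k`. -/
def blockC {d n : ℕ} {r : Fin d → ℕ} (Cm : (k : Fin d) → Matrix (Fin (r k)) (Fin n) ℝ) :
    Matrix ((k : Fin d) × Fin (r k)) (Fin d × Fin n) ℝ :=
  Matrix.of fun p q => if p.1 = q.1 then Cm p.1 p.2 q.2 else 0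

/-- Kronecker product `M ⊗ Iₙ`. -/
def kronI (n : ℕ) {a b : ℕ} (M : Matrix (Fin a) (Fin b) ℝ) :
    Matrix (Fin a × Fin n) (Fin b × Fin n) ℝ :=
  Matrix.kroneckerMap (· * ·) M (1 : Matrix (Fin n) (Fin n) ℝ)

/-- `span Ī`: the consensus subspace of stacked vectors whose `m` blocks in `ℝⁿ` coincide,
i.e. the column span of `Ī = 1ₘ ⊗ Iₙ`. -/
def consensusSub (m n : ℕ) : Submodule ℝ (Fin m × Fin n → ℝ) :=
  LinearMap.range (LinearMap.funLeft ℝ ℝ (Prod.snd : Fin m × Fin n → Fin n))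

/-- Weak connectivity of the digraph with arcs `(src k, dst k)`. -/
def WeaklyConnected (m d : ℕ) (src dst : Fin d → Fin m) : Prop :=
  ∀ u v : Fin m, Relation.ReflTransGen
    (fun a b => (∃ k, src k = a ∧ dst k = b) ∨ (∃ k, src k = b ∧ dst k = a)) u v

/-- Number of neighbors of vertex `i` in the (symmetric) subgraph of arcs `S`. -/
noncomputable def nbrDeg (m d : ℕ) (src dst : Fin d → Fin m) (S : Finset (Fin d)) (i : Fin m) : ℕ :=
  Set.ncard {j : Fin m | ∃ k ∈ S, src k = i ∧ dst k = j}

/-- Metropolis weight of the arc `k = (j, i)` of the subgraph with arc set `S`: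
`1 / (1 + max (deg j) (deg i))`. -/
noncomputable def metroW (m d : ℕ) (src dst : Fin d → Fin m) (S : Finset (Fin d)) (k : Fin d) : ℝ :=
  1 / (1 + (max (nbrDeg m d src dst S (src k)) (nbrDeg m d src dst S (dst k)) : ℝ))

/-- Diagonal entries of the spanning weight matrix of the subgraph with arc set `S`:
the Metropolis weight on arcs of `S`, and `0` elsewhere. -/
noncomputable def spanWvec (m d : ℕ) (src dst : Fin d → Fin m) (S : Finset (Fin d)) (k : Fin d) : ℝ :=
  if k ∈ S then metroW m d src dst S k else 0

/-- Spanning incidence matrix of the spanning subgraph with arc set `S`: the columns of the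
incidence matrix on arcs of `S`, and zero columns elsewhere. -/
def spanIncMat (m d : ℕ) (src dst : Fin d → Fin m) (S : Finset (Fin d)) :
    Matrix (Fin m) (Fin d) ℝ :=
  Matrix.of fun i k => if k ∈ S then incMat m d src dst i k else 0

theorem sqrtSum_entry (m n d p : ℕ) (src dst : Fin d → Fin m) (S : Fin p → Finset (Fin d))
    (q : Fin d × Fin n) (y : Fin m × Fin n) :
    (∑ i : Fin p, kronI n (Matrix.diagonal fun k => Real.sqrt (spanWvec m d src dst (S i) k))
          * (kronI n (spanIncMat m d src dst (S i)))ᵀ) q y =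
      (∑ i : Fin p, Real.sqrt (spanWvec m d src dst (S i) q.1)) *
        (kronI n (incMat m d src dst))ᵀ q y := by
  rw [Matrix.sum_apply, Finset.sum_mul]
  refine Finset.sum_congr rfl fun i _ => ?_
  rw [Matrix.mul_apply, Finset.sum_eq_single q]
  · by_cases h : q.1 ∈ S i
    · simp [kronI, spanIncMat, h]
    · simp [kronI, spanIncMat, spanWvec, h]
  · rintro ⟨k, b⟩ - hne
    obtain ⟨k', b'⟩ := q
    by_cases h1 : k' = k
    · by_cases h2 : b' = b
      · exact absurd (by rw [h1, h2]) hne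
      · simp [kronI, h2]
    · simp [kronI, h1]
  · simp

theorem blockC_scale {d n : ℕ} {r : Fin d → ℕ} {β : Type*}
    (Cm : (k : Fin d) → Matrix (Fin (r k)) (Fin n) ℝ)
    (s : Fin d → ℝ) (X Y : Matrix (Fin d × Fin n) β ℝ)
    (h : ∀ q y, Y q y = s q.1 * X q y) (z : (k : Fin d) × Fin (r k)) (y : β) :
    (blockC Cm * Y) z y = s z.1 * (blockC Cm * X) z y := by
  rw [Matrix.mul_apply, Matrix.mul_apply, Finset.mul_sum]
  refine Finset.sum_congr rfl fun q _ => ?_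
  rw [h]
  by_cases hq : z.1 = q.1
  · rw [hq]; ring
  · simp [blockC, hq]

theorem sqrtSum_pos (m d p : ℕ) (src dst : Fin d → Fin m) (S : Fin p → Finset (Fin d))
    (k : Fin d) (hk : ∃ i, k ∈ S i) :
    0 < ∑ i : Fin p, Real.sqrt (spanWvec m d src dst (S i) k) := by
  obtain ⟨i, hi⟩ := hk
  refine Finset.sum_pos' (fun _ _ => Real.sqrt_nonneg _) ⟨i, Finset.mem_univ _, ?_⟩
  apply Real.sqrt_pos.2
  rw [spanWvec, if_pos hi, metroW]
  positivity

/-- For a symmetric digraph `G` (arcs `(src k, dst k)`, matrix `Cm k` on arc `k`)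
and symmetric spanning subgraphs `G_1, …, G_p` (arc sets `S i`) whose union is `G`, one has
`ker (C J̄ᵀ) = ker (C ∑ᵢ W̄ᵢ^{1/2} J̄ᵢᵀ)`, where `Jᵢ, Wᵢ` are the spanning incidence and
spanning (Metropolis) weight matrices of `G_i`. -/
theorem stmt_12 (m n d p : ℕ) (src dst : Fin d → Fin m)
    (hself : ∀ k, src k ≠ dst k) (hinj : Function.Injective fun k => (src k, dst k))
    (hsymG : ∀ k : Fin d, ∃ k' : Fin d, src k' = dst k ∧ dst k' = src k)
    (r : Fin d → ℕ) (Cm : (k : Fin d) → Matrix (Fin (r k)) (Fin n) ℝ)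
    (S : Fin p → Finset (Fin d))
    (hsymS : ∀ i, ∀ k ∈ S i, ∃ k' ∈ S i, src k' = dst k ∧ dst k' = src k)
    (hunion : ∀ k : Fin d, ∃ i : Fin p, k ∈ S i) :
    LinearMap.ker (blockC Cm * (kronI n (incMat m d src dst))ᵀ).mulVecLin =
    LinearMap.ker (blockC Cm * ∑ i : Fin p,
        kronI n (Matrix.diagonal fun k => Real.sqrt (spanWvec m d src dst (S i) k))
          * (kronI n (spanIncMat m d src dst (S i)))ᵀ).mulVecLin := by
  ext x
  rw [LinearMap.mem_ker, LinearMap.mem_ker, Matrix.mulVecLin_apply, Matrix.mulVecLin_apply,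
    funext_iff, funext_iff]
  refine forall_congr' fun z => ?_
  have key := blockC_scale Cm (fun k => ∑ i : Fin p, Real.sqrt (spanWvec m d src dst (S i) k))
    _ _ (sqrtSum_entry m n d p src dst S) z
  have hpos := sqrtSum_pos m d p src dst S z.1 (hunion z.1)
  simp only [Matrix.mulVec, dotProduct, key, mul_assoc, ← Finset.mul_sum, Pi.zero_apply,
    mul_eq_zero, hpos.ne', false_or]
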